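/- Let G be a connected graph on ℕ with uniformly bounded degree and deg(i) ≥ 1 for all i. If G is a regular or a biregular graph, then there exist scalars α_i ≠ 0 and a bijection π : ℕ → ℕ such that f(δ_i) = α_i δ_{π(i)} defines an isomorphism of Hilbert evolution algebras from A_RW(G) to A(G), and the linear isometric equivalence U of ℓ²(ℕ) determined by U(δ_i) = δ_{π(i)} is a unitary isomorphism of Hilbert evolution algebras from ℓ²(ℕ) with the product (v ·̃ w)_k = ∑_i v_i w_i (α_k/α_i²)(a_{ki}/deg(i)) onto A(G), i.e. U(v ·̃ w) = U(v) ⋆ U(w) for all v, w. Conversely, if in addition G is non-singular (the bounded adjacency operator A has trivial kernel) and there exists an isomorphism of Hilbert evolution algebras from A_RW(G) to A(G) of the form f(δ_i) = α_i δ_{π(i)} with α_i ≠ 0 and π a bijection, then G is a regular or a biregular graph. -/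

import Mathlib

/-!
An isomorphism `f(δ_i) = α_i δ_{π(i)}` from `A_RW(G)` to `A(G)` amounts to the identities
`a_{π(k)π(i)} α_i² = a_{ki} α_k / deg(i)`, obtained by comparing `f(δ_i ∘ δ_i)` with
`f(δ_i) ⋆ f(δ_i)`. Hence `α_k = α_i² deg(i)` along every edge; call this the *edge relation*.

If the edge relation holds for some `α` bounded above and away from zero, then the diagonal
operator `δ_i ↦ α_i δ_i` is the required isomorphism with `π = id`, and the twisted product
coincides with `⋆`, so that `U = id` works (`exists_iso_of_edge_relation`). For a regular graph
the constant `α = 1/d` satisfies the relation. For a biregular graph, `α` is constant on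
each side of the bipartition, with values `x, y` solving `y = x² d₁` and `x = y² d₂`, i.e.
`x = (d₁² d₂)^{-1/3}` and `y = x² d₁`.

Conversely, under the edge relation the pair `(α_i, deg(i))` determines the same pair at every
neighbour of `i`, and going two steps along a walk brings it back to its initial value. By
connectedness only two pairs occur and they alternate along edges: the graph is regular when the
two values of `α` agree, and biregular otherwise (`regular_or_biregular_of_edge_relation`).
-/


noncomputable section
open scoped ENNReal

/-- The real Hilbert space ℓ²(ℕ) of square-summable sequences. -/
abbrev l2 : Type := lp (fun _ : ℕ => ℝ) 2

/-- The degree of vertex `i` in the graph with adjacency coefficients `a`. -/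
def deg (a : ℕ → ℕ → ℝ) (i : ℕ) : ℝ := ∑' k, a k i

/-- `a` is the adjacency function of a simple graph (0/1-valued, symmetric, no loops). -/
def SimpleAdj (a : ℕ → ℕ → ℝ) : Prop :=
  (∀ k i, a k i = 0 ∨ a k i = 1) ∧ (∀ k i, a k i = a i k) ∧ (∀ i, a i i = 0)

/-- The graph is connected: any two vertices are joined by a finite path of edges. -/
def Connected (a : ℕ → ℕ → ℝ) : Prop :=
  ∀ i j : ℕ, Relation.ReflTransGen (fun x y => a x y = 1) i j

/-- The graph is locally finite: every degree series converges. -/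
def GraphLocallyFinite (a : ℕ → ℕ → ℝ) : Prop := ∀ i, Summable fun k => a k i

/-- The graph has uniformly bounded degree. -/
def UnifBoundedDegree (a : ℕ → ℕ → ℝ) : Prop := ∃ M > 0, ∀ i, deg a i ≤ M

/-- The graph is regular: all degrees are equal. -/
def GraphRegular (a : ℕ → ℕ → ℝ) : Prop := ∃ d : ℝ, ∀ i, deg a i = d

/-- The graph is biregular: the vertex set splits as `V₁ ⊔ V₂` with every edge joining `V₁`
to `V₂` and constant degrees `d₁` on `V₁` and `d₂` on `V₂`. -/
def GraphBiregular (a : ℕ → ℕ → ℝ) : Prop :=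
  ∃ (V₁ : Set ℕ) (d₁ d₂ : ℝ),
    (∀ i ∈ V₁, deg a i = d₁) ∧ (∀ i ∉ V₁, deg a i = d₂) ∧
    ∀ i k, a k i = 1 → ((i ∈ V₁ ∧ k ∉ V₁) ∨ (i ∉ V₁ ∧ k ∈ V₁))

/-- `p` is the product `v ⋆ w` in the Hilbert evolution algebra `A(G)`:
`p_k = ∑_i v_i w_i a_{ki}` with all series convergent. -/
def IsStarProd (a : ℕ → ℕ → ℝ) (v w p : l2) : Prop :=
  (∀ k, Summable fun i => v i * w i * a k i) ∧
  ∀ k, p k = ∑' i, v i * w i * a k i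

/-- `p` is the product `v ∘ w` in the Hilbert evolution algebra `A_RW(G)`:
`p_k = ∑_i v_i w_i a_{ki}/deg(i)` with all series convergent. -/
def IsRWProd (a : ℕ → ℕ → ℝ) (v w p : l2) : Prop :=
  (∀ k, Summable fun i => v i * w i * (a k i / deg a i)) ∧
  ∀ k, p k = ∑' i, v i * w i * (a k i / deg a i)

/-- The graph is non-singular: the adjacency operator `(A v)_k = ∑_i a_{ki} v_i` on ℓ²(ℕ)
has trivial kernel. -/
def NonSingular (a : ℕ → ℕ → ℝ) : Prop :=
  ∀ v : l2, (∀ k, ∑' i, a k i * v i = 0) → v = 0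

/-- The standard orthonormal basis vector `δ_i` of ℓ²(ℕ). -/
def delta (i : ℕ) : l2 := lp.single 2 i (1 : ℝ)

/-- `p` is the product `v ·̃ w` on ℓ²(ℕ) with the twisted structure constants
`c̃_{ki} = (α_k/α_i²)·(a_{ki}/deg(i))`: `p_k = ∑_i v_i w_i c̃_{ki}`. -/
def IsTildeProd (a : ℕ → ℕ → ℝ) (α : ℕ → ℝ) (v w p : l2) : Prop :=
  (∀ k, Summable fun i => v i * w i * (α k / α i ^ 2 * (a k i / deg a i))) ∧
  ∀ k, p k = ∑' i, v i * w i * (α k / α i ^ 2 * (a k i / deg a i))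

lemma delta_apply (i k : ℕ) : (delta i : ℕ → ℝ) k = if k = i then 1 else 0 := by
  simp [delta, Pi.single_apply]

lemma memlp_diag (α : ℕ → ℝ) (C : ℝ) (hα : ∀ i, |α i| ≤ C) (v : l2) :
    Memℓp (fun i => α i * v i) 2 := by
  have h : Memℓp (fun i => C * v i) 2 := (lp.memℓp v).const_mul C
  refine h.mono' fun i => ?_
  simp only [norm_mul, Real.norm_eq_abs]
  exact mul_le_mul_of_nonneg_right ((hα i).trans (le_abs_self C)) (abs_nonneg _)

/-- The diagonal operator `δ_i ↦ α_i δ_i` on ℓ²(ℕ), for a bounded sequence `α`. -/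
def diagMap (α : ℕ → ℝ) (C : ℝ) (hα : ∀ i, |α i| ≤ C) : l2 →ₗ[ℝ] l2 where
  toFun v := ⟨fun i => α i * v i, memlp_diag α C hα v⟩
  map_add' v w := by
    ext i
    exact mul_add (α i) (v i) (w i)
  map_smul' c v := by
    ext i
    exact mul_left_comm (α i) c (v i)

lemma diagMap_apply (α : ℕ → ℝ) (C : ℝ) (hα : ∀ i, |α i| ≤ C) (v : l2) (i : ℕ) :
    (diagMap α C hα v : ℕ → ℝ) i = α i * v i := rfl

lemma norm_diagMap_le (α : ℕ → ℝ) (C : ℝ) (hα : ∀ i, |α i| ≤ C) (v : l2) :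
    ‖diagMap α C hα v‖ ≤ C * ‖v‖ := by
  have hC : 0 ≤ C := (abs_nonneg _).trans (hα 0)
  have h : ‖diagMap α C hα v‖ ≤ ‖C • v‖ := by
    refine lp.norm_mono (by norm_num) fun i => ?_
    rw [diagMap_apply, lp.coeFn_smul, Pi.smul_apply, smul_eq_mul, norm_mul, norm_mul]
    exact mul_le_mul_of_nonneg_right ((hα i).trans (le_abs_self C)) (norm_nonneg _)
  rwa [norm_smul, Real.norm_of_nonneg hC] at h

/-- The diagonal operator `δ_i ↦ α_i δ_i` as a topological isomorphism, when `α` is bounded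
and bounded away from zero. -/
def diagEquiv (α : ℕ → ℝ) (C : ℝ) (h0 : ∀ i, α i ≠ 0) (hα : ∀ i, |α i| ≤ C)
    (hα' : ∀ i, |(α i)⁻¹| ≤ C) : l2 ≃L[ℝ] l2 :=
  LinearEquiv.toContinuousLinearEquivOfBounds
    (LinearEquiv.ofLinearMap (diagMap α C hα) (diagMap (fun i => (α i)⁻¹) C hα')
      (by
        ext v i
        exact mul_inv_cancel_left₀ (h0 i) (v i))
      (by
        ext v i
        exact inv_mul_cancel_left₀ (h0 i) (v i)))
    C C (norm_diagMap_le α C hα) (norm_diagMap_le _ C hα')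

lemma diagEquiv_apply (α : ℕ → ℝ) (C : ℝ) (h0 : ∀ i, α i ≠ 0) (hα : ∀ i, |α i| ≤ C)
    (hα' : ∀ i, |(α i)⁻¹| ≤ C) (v : l2) (i : ℕ) :
    (diagEquiv α C h0 hα hα' v : ℕ → ℝ) i = α i * v i := rfl

/-- The edge relation `α_k = α_i² deg(i)` produces both isomorphisms, with `π = id`. -/
lemma exists_iso_of_edge_relation (a : ℕ → ℕ → ℝ) (h01 : ∀ k i, a k i = 0 ∨ a k i = 1)
    (hdeg : ∀ i, 1 ≤ deg a i) (α : ℕ → ℝ) (C : ℝ) (h0 : ∀ i, α i ≠ 0)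
    (hα : ∀ i, |α i| ≤ C) (hα' : ∀ i, |(α i)⁻¹| ≤ C)
    (hedge : ∀ i k, a k i = 1 → α k = α i ^ 2 * deg a i) :
    ∃ (f : l2 ≃L[ℝ] l2) (π : Equiv.Perm ℕ) (α : ℕ → ℝ),
      (∀ i, α i ≠ 0) ∧
      (∀ i, f (delta i) = α i • delta (π i)) ∧
      (∀ v w p q : l2, IsRWProd a v w p → IsStarProd a (f v) (f w) q → f p = q) ∧
      ∃ U : l2 ≃ₗᵢ[ℝ] l2,
        (∀ i, U (delta i) = delta (π i)) ∧
        (∀ v w p q : l2,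
          IsTildeProd a α v w p → IsStarProd a (U v) (U w) q → U p = q) := by
  have hd : ∀ i, deg a i ≠ 0 := fun i => by linarith [hdeg i]
  refine ⟨diagEquiv α C h0 hα hα', Equiv.refl ℕ, α, h0, ?_, ?_,
    LinearIsometryEquiv.refl ℝ l2, fun i => rfl, ?_⟩
  · intro i
    ext k
    rw [diagEquiv_apply, lp.coeFn_smul, Pi.smul_apply, smul_eq_mul, Equiv.refl_apply,
      delta_apply]
    split_ifs with h
    · rw [h]
    · simp
  · intro v w p q hp hq
    ext k
    rw [diagEquiv_apply, hp.2 k, hq.2 k, ← tsum_mul_left]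
    refine tsum_congr fun i => ?_
    rw [diagEquiv_apply, diagEquiv_apply]
    rcases h01 k i with h | h
    · simp [h]
    · have := hd i
      rw [h, hedge i k h]
      field_simp
  · intro v w p q hp hq
    ext k
    change p k = q k
    rw [hp.2 k, hq.2 k]
    refine tsum_congr fun i => ?_
    change _ = v i * w i * a k i
    rcases h01 k i with h | h
    · simp [h]
    · have := hd i
      have := h0 i
      rw [h, hedge i k h]
      field_simp

/-- In a connected graph, a nowhere vanishing solution of the edge relation takes at most two values,
alternating along edges, and determines the degrees. -/
lemma regular_or_biregular_of_edge_relation (a : ℕ → ℕ → ℝ) (hsymm : ∀ k i, a k i = a i k)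
    (hconn : Connected a) (α : ℕ → ℝ) (h0 : ∀ i, α i ≠ 0)
    (hedge : ∀ i k, a k i = 1 → α k = α i ^ 2 * deg a i) :
    GraphRegular a ∨ GraphBiregular a := by
  have hdeg_of_edge : ∀ i k, a k i = 1 → deg a i = α k / α i ^ 2 := by
    intro i k h
    have := h0 i
    rw [hedge i k h]
    field_simp
  obtain ⟨x, hx⟩ : ∃ x, x = α 0 := ⟨_, rfl⟩
  obtain ⟨y, hy⟩ : ∃ y, y = x ^ 2 * deg a 0 := ⟨_, rfl⟩
  have hx0 : x ≠ 0 := hx ▸ h0 0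
  have key : ∀ i, (α i = x ∧ deg a i = y / x ^ 2) ∨ (α i = y ∧ deg a i = x / y ^ 2) := by
    intro i
    induction hconn 0 i with
    | refl =>
      left
      refine ⟨hx.symm, ?_⟩
      rw [hy]
      field_simp
    | @tail i k _ hik ih =>
      have hki : a k i = 1 := by rw [hsymm]; exact hik
      have hk := hdeg_of_edge k i hik
      have hi := hdeg_of_edge i k hki
      have hα : α k = α i ^ 2 * deg a i := hedge i k hki
      have hi0 := h0 i
      rcases ih with ⟨h1, h2⟩ | ⟨h1, h2⟩
      · right
        have : α k = y := by
          rw [hα, h1, h2]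
          field_simp
        exact ⟨this, by rw [hk, this, h1]⟩
      · left
        have : α k = x := by
          rw [h1] at hi0
          rw [hα, h1, h2]
          field_simp
        exact ⟨this, by rw [hk, this, h1]⟩
  by_cases hxy : x = y
  · left
    refine ⟨y / x ^ 2, fun i => ?_⟩
    rcases key i with h | h
    · exact h.2
    · rw [h.2, ← hxy]
  · right
    refine ⟨{i | α i = x}, y / x ^ 2, x / y ^ 2, ?_, ?_, ?_⟩
    · intro i hi
      rcases key i with h | h
      · exact h.2
      · exact absurd (hi.symm.trans h.1) hxy
    · intro i hi
      rcases key i with h | h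
      · exact absurd h.1 hi
      · exact h.2
    · intro i k hki
      have hα := hedge i k hki
      have hi0 := h0 i
      rcases key i with ⟨h1, h2⟩ | ⟨h1, h2⟩
      · left
        have : α k = y := by
          rw [hα, h1, h2]
          field_simp
        exact ⟨h1, fun h => hxy (h.symm.trans this)⟩
      · right
        have : α k = x := by
          rw [h1] at hi0
          rw [hα, h1, h2]
          field_simp
        exact ⟨fun h => hxy (h.symm.trans h1), this⟩

/-- By continuity, `f(δ_i) = α_i δ_{π(i)}` determines every coordinate of `f p`. -/
lemma apply_perm_of_delta (f : l2 ≃L[ℝ] l2) (π : Equiv.Perm ℕ) (α : ℕ → ℝ)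
    (hf : ∀ i, f (delta i) = α i • delta (π i)) (p : l2) (k : ℕ) :
    (f p : ℕ → ℝ) (π k) = α k * p k := by
  have h1 : HasSum (fun i => lp.single 2 i (p i)) p := lp.hasSum_single (by norm_num) p
  have h2 := (h1.mapL (f : l2 →L[ℝ] l2)).mapL (lp.evalCLM ℝ (fun _ : ℕ => ℝ) 2 (π k))
  have h3 : ∀ i, (f (lp.single 2 i (p i)) : ℕ → ℝ) (π k) = if i = k then α k * p k else 0 := by
    intro i
    have : (lp.single 2 i (p i) : l2) = p i • delta i := by
      rw [delta, ← lp.single_smul]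
      simp
    rw [this, map_smul, hf, lp.coeFn_smul, lp.coeFn_smul, Pi.smul_apply, Pi.smul_apply,
      delta_apply]
    by_cases h : i = k
    · subst h
      simp [mul_comm]
    · have : π k ≠ π i := fun hh => h (π.injective hh).symm
      simp [h, this]
  have h4 : HasSum (fun i => if i = k then α k * p k else 0) ((f p : ℕ → ℝ) (π k)) := by
    refine HasSum.congr_fun ?_ fun i => (h3 i).symm
    exact h2
  exact h4.unique (hasSum_ite_eq k _)

/-- Column `i` of the adjacency matrix lies in ℓ²(ℕ). -/
lemma memlp_col (a : ℕ → ℕ → ℝ) (h01 : ∀ k i, a k i = 0 ∨ a k i = 1)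
    (hlf : GraphLocallyFinite a) (i : ℕ) : Memℓp (fun k => a k i) 2 := by
  refine memℓp_gen ((hlf i).congr fun k => ?_)
  rcases h01 k i with h | h <;> simp [h]

/-- An isomorphism `f(δ_i) = α_i δ_{π(i)}` forces the edge relation: compare the coordinate
`π(k)` of `f(δ_i ∘ δ_i)` and of `f(δ_i) ⋆ f(δ_i)`. -/
lemma edge_relation_of_iso (a : ℕ → ℕ → ℝ) (h01 : ∀ k i, a k i = 0 ∨ a k i = 1)
    (hlf : GraphLocallyFinite a) (hdeg : ∀ i, 1 ≤ deg a i)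
    (f : l2 ≃L[ℝ] l2) (π : Equiv.Perm ℕ) (α : ℕ → ℝ) (h0 : ∀ i, α i ≠ 0)
    (hf : ∀ i, f (delta i) = α i • delta (π i))
    (hprod : ∀ v w p q : l2, IsRWProd a v w p → IsStarProd a (f v) (f w) q → f p = q)
    (i k : ℕ) (hki : a k i = 1) : α k = α i ^ 2 * deg a i := by
  have hd : deg a i ≠ 0 := by linarith [hdeg i]
  let col : ℕ → l2 := fun j => ⟨fun k => a k j, memlp_col a h01 hlf j⟩
  have hcol : ∀ j k, (col j : ℕ → ℝ) k = a k j := fun _ _ => rfl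
  have hp : IsRWProd a (delta i) (delta i) ((deg a i)⁻¹ • col i) := by
    have hs : ∀ k, HasSum (fun j => (delta i : ℕ → ℝ) j * (delta i : ℕ → ℝ) j
        * (a k j / deg a j)) (a k i / deg a i) := by
      intro k
      convert hasSum_ite_eq i (a k i / deg a i) using 2 with j
      rw [delta_apply]
      split_ifs with h
      · simp [h]
      · simp
    refine ⟨fun k => (hs k).summable, fun k => ?_⟩
    rw [(hs k).tsum_eq, lp.coeFn_smul, Pi.smul_apply, hcol, smul_eq_mul, div_eq_inv_mul]
  have hq : IsStarProd a (f (delta i)) (f (delta i)) (α i ^ 2 • col (π i)) := by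
    have hs : ∀ k, HasSum (fun j => (f (delta i) : ℕ → ℝ) j * (f (delta i) : ℕ → ℝ) j
        * a k j) (α i ^ 2 * a k (π i)) := by
      intro k
      convert hasSum_ite_eq (π i) (α i ^ 2 * a k (π i)) using 2 with j
      rw [hf, lp.coeFn_smul, Pi.smul_apply, delta_apply]
      split_ifs with h
      · simp [h, sq]
      · simp
    refine ⟨fun k => (hs k).summable, fun k => ?_⟩
    rw [(hs k).tsum_eq, lp.coeFn_smul, Pi.smul_apply, hcol, smul_eq_mul]
  have h := congrArg (fun u : l2 => (u : ℕ → ℝ) (π k)) (hprod _ _ _ _ hp hq)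
  simp only at h
  rw [apply_perm_of_delta f π α hf, lp.coeFn_smul, lp.coeFn_smul, Pi.smul_apply,
    Pi.smul_apply, hcol, hcol, hki, smul_eq_mul, smul_eq_mul] at h
  have hk0 := h0 k
  -- The left side is nonzero, so `π(k)` and `π(i)` are adjacent as well.
  rcases h01 (π k) (π i) with h' | h'
  · rw [h', mul_zero] at h
    exact absurd h (mul_ne_zero hk0 (mul_ne_zero (inv_ne_zero hd) one_ne_zero))
  · rw [h', mul_one, mul_one] at h
    rw [← h]
    field_simp

/-- for a connected graph with uniformly bounded degree and degrees ≥ 1: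
if the graph is regular or biregular, then there is an isomorphism
`f(δ_i) = α_i δ_{π(i)}` of Hilbert evolution algebras from `A_RW(G)` to `A(G)`, and the
linear isometric equivalence `U(δ_i) = δ_{π(i)}` is a unitary isomorphism from ℓ²(ℕ) with
the twisted product `·̃` onto `A(G)`; conversely, if moreover the graph is non-singular
and some isomorphism from `A_RW(G)` to `A(G)` of the form `f(δ_i) = α_i δ_{π(i)}` exists,
then the graph is regular or biregular. -/
theorem unitary_iso_criterion
    (a : ℕ → ℕ → ℝ)
    (hadj : SimpleAdj a) (hconn : Connected a)
    (hlf : GraphLocallyFinite a) (hubd : UnifBoundedDegree a)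
    (hdeg : ∀ i, 1 ≤ deg a i) :
    ((GraphRegular a ∨ GraphBiregular a) →
      ∃ (f : l2 ≃L[ℝ] l2) (π : Equiv.Perm ℕ) (α : ℕ → ℝ),
        (∀ i, α i ≠ 0) ∧
        (∀ i, f (delta i) = α i • delta (π i)) ∧
        (∀ v w p q : l2, IsRWProd a v w p → IsStarProd a (f v) (f w) q → f p = q) ∧
        ∃ U : l2 ≃ₗᵢ[ℝ] l2,
          (∀ i, U (delta i) = delta (π i)) ∧
          (∀ v w p q : l2,
            IsTildeProd a α v w p → IsStarProd a (U v) (U w) q → U p = q)) ∧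
    (NonSingular a →
      (∃ (f : l2 ≃L[ℝ] l2) (π : Equiv.Perm ℕ) (α : ℕ → ℝ),
        (∀ i, α i ≠ 0) ∧
        (∀ i, f (delta i) = α i • delta (π i)) ∧
        (∀ v w p q : l2, IsRWProd a v w p → IsStarProd a (f v) (f w) q → f p = q)) →
      GraphRegular a ∨ GraphBiregular a) := by
  obtain ⟨h01, hsymm, -⟩ := hadj
  refine ⟨?_, ?_⟩
  · rintro (⟨d, hd⟩ | ⟨V, d₁, d₂, h1, h2, hV⟩)
    · have hd1 : 1 ≤ d := hd 0 ▸ hdeg 0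
      have hd0 : d ≠ 0 := by linarith
      refine exists_iso_of_edge_relation a h01 hdeg (fun _ => d⁻¹) (|d⁻¹| + |d|)
        (fun _ => inv_ne_zero hd0) (fun _ => by linarith [abs_nonneg d])
        (fun _ => by rw [inv_inv]; linarith [abs_nonneg d⁻¹]) ?_
      intro i k _
      simp only [hd i]
      field_simp
    · -- An edge exists, so both sides are nonempty and `d₁, d₂` are genuine degrees.
      have hpos : 0 < d₁ ∧ 0 < d₂ := by
        obtain ⟨k, hk⟩ : ∃ k, a k 0 = 1 := by
          by_contra! hne
          have : deg a 0 = 0 := by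
            have hz : ∀ k, a k 0 = 0 := fun k => (h01 k 0).resolve_right (hne k)
            simp [deg, hz]
          linarith [hdeg 0]
        rcases hV 0 k hk with ⟨hi, hk'⟩ | ⟨hi, hk'⟩
        · exact ⟨by linarith [hdeg 0, h1 0 hi], by linarith [hdeg k, h2 k hk']⟩
        · exact ⟨by linarith [hdeg k, h1 k hk'], by linarith [hdeg 0, h2 0 hi]⟩
      obtain ⟨hd1, hd2⟩ := hpos
      obtain ⟨x, hx, hx3⟩ : ∃ x : ℝ, 0 < x ∧ x ^ 3 * (d₁ ^ 2 * d₂) = 1 := by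
        have hD : 0 < (d₁ ^ 2 * d₂)⁻¹ := by positivity
        refine ⟨(d₁ ^ 2 * d₂)⁻¹ ^ ((3 : ℝ)⁻¹), Real.rpow_pos_of_pos hD _, ?_⟩
        have h := Real.rpow_inv_natCast_pow hD.le (n := 3) (by norm_num)
        push_cast at h
        rw [h, inv_mul_cancel₀ (by positivity)]
      obtain ⟨y, hy⟩ : ∃ y, y = x ^ 2 * d₁ := ⟨_, rfl⟩
      have hy0 : 0 < y := by rw [hy]; positivity
      have hxy : x = y ^ 2 * d₂ := by
        rw [hy]
        linear_combination -x * hx3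
      classical
      refine exists_iso_of_edge_relation a h01 hdeg (fun i => if i ∈ V then x else y)
        (x + y + x⁻¹ + y⁻¹) ?_ ?_ ?_ ?_
      · intro i
        split_ifs
        exacts [hx.ne', hy0.ne']
      · intro i
        have := inv_pos.2 hx
        have := inv_pos.2 hy0
        split_ifs
        · rw [abs_of_pos hx]; linarith
        · rw [abs_of_pos hy0]; linarith
      · intro i
        have := inv_pos.2 hx
        have := inv_pos.2 hy0
        split_ifs
        · rw [abs_of_pos (inv_pos.2 hx)]; linarith
        · rw [abs_of_pos (inv_pos.2 hy0)]; linarith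
      · intro i k hki
        rcases hV i k hki with ⟨hi, hk⟩ | ⟨hi, hk⟩
        · simp only [hi, hk, if_true, if_false, h1 i hi, hy]
        · simp only [hi, hk, if_true, if_false, h2 i hi]
          exact hxy
  · rintro - ⟨f, π, α, h0, hf, hprod⟩
    exact regular_or_biregular_of_edge_relation a hsymm hconn α h0
      (edge_relation_of_iso a h01 hlf hdeg f π α h0 hf hprod)
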